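/- Fix μ ∈ ℝ^n. Let U be a block-diagonal orthogonal matrix (U^{ij} = 0 whenever μ_i ≠ μ_j), let M be a symmetric matrix, and h ∈ ℝ^n a vector with UᵀM_in U = Diag h. Then for any μ-block-constant k-tensor T on ℝ^n, any matrices H₁,…,H_k, any permutation σ on {1,…,k}, and every l = 1,…,k: ⟨T^{τ_l}[h], H̃₁ ∘_σ ⋯ ∘_σ H̃_k⟩ = ⟨T^{τ_l}_in, H₁ ∘_{σ_{(l)}} ⋯ ∘_{σ_{(l)}} H_k ∘_{σ_{(l)}} M_in⟩, where H̃_i = UᵀH_iU. -/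

import Mathlib

open scoped BigOperators
open Filter Asymptotics Matrix

attribute [local instance] Matrix.normedAddCommGroup

noncomputable section

/-- A `k`-tensor on `ℝ^n`, identified with its array of entries. -/
abbrev Tensor (k n : ℕ) : Type := (Fin k → Fin n) → ℝ

/-- A `2k`-tensor on `ℝ^n`, with its indices grouped into two groups of `k`. -/
abbrev Tensor2 (k n : ℕ) : Type := (Fin k → Fin n) → (Fin k → Fin n) → ℝ

/-- The `σ`-Hadamard product of `k` matrices:
`(H₁ ∘_σ ⋯ ∘_σ H_k)^{i₁…i_k} = ∏ s, H_s^{i_s i_{σ⁻¹(s)}}`. -/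
def hadamardProd {k n : ℕ} (σ : Equiv.Perm (Fin k))
    (H : Fin k → Matrix (Fin n) (Fin n) ℝ) : Tensor k n :=
  fun i => ∏ s, H s (i s) (i (σ⁻¹ s))

/-- The dot product of two `k`-tensors. -/
def tdot {k n : ℕ} (T₁ T₂ : Tensor k n) : ℝ :=
  ∑ p : Fin k → Fin n, T₁ p * T₂ p

/-- `Diag^σ T`, the `2k`-tensor equal to `T^{i₁…i_k}` when `i_s = j_{σ(s)}` for all `s`,
and `0` otherwise. -/
def diagPerm {k n : ℕ} (σ : Equiv.Perm (Fin k)) (T : Tensor k n) : Tensor2 k n :=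
  fun i j => if ∀ s, i s = j (σ s) then T i else 0

/-- A `2k`-tensor viewed as a `k`-tensor on matrix arguments:
`S[H₁,…,H_k] = ∑_{p,q} S^{p₁…p_k}_{q₁…q_k} ∏ s, H_s^{p_s q_s}`. -/
def apply2 {k n : ℕ} (S : Tensor2 k n)
    (H : Fin k → Matrix (Fin n) (Fin n) ℝ) : ℝ :=
  ∑ p : Fin k → Fin n, ∑ q : Fin k → Fin n, S p q * ∏ s, H s (p s) (q s)

/-- Conjugation `U S Uᵀ` of a `2k`-tensor `S` by a matrix `U`. -/
def conj2 {k n : ℕ} (U : Matrix (Fin n) (Fin n) ℝ) (S : Tensor2 k n) : Tensor2 k n :=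
  fun i j => ∑ p : Fin k → Fin n, ∑ q : Fin k → Fin n,
    S p q * ((∏ s, U (i s) (p s)) * ∏ s, U (j s) (q s))

/-- For a `2(k+1)`-tensor `S` viewed as a `(k+1)`-tensor on matrices, `S[H]` fixes the last
matrix argument to `H`, producing a `2k`-tensor. -/
def lastApply {k n : ℕ} (S : Tensor2 (k+1) n)
    (H : Matrix (Fin n) (Fin n) ℝ) : Tensor2 k n :=
  fun i j => ∑ a : Fin n, ∑ b : Fin n, S (Fin.snoc i a) (Fin.snoc j b) * H a b

/-- `T[x]`: contraction of the last index of a `(k+1)`-tensor against a vector. -/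
def contract {k n : ℕ} (T : Tensor (k+1) n) (x : Fin n → ℝ) : Tensor k n :=
  fun i => ∑ a : Fin n, T (Fin.snoc i a) * x a

/-- A permutation `σ` of `{1,…,k}` viewed as a permutation of `{1,…,k+1}` fixing `k+1`. -/
def extPerm {k : ℕ} (σ : Equiv.Perm (Fin k)) : Equiv.Perm (Fin (k+1)) :=
  (Equiv.permCongr finSuccEquivLast).symm σ.optionCongr

/-- `σ_{(l)} := σ ∘ τ_l`, where `τ_l` is the transposition `(l, k+1)` (and `σ` fixes `k+1`).
Here `l : Fin (k+1)`; taking `l = Fin.last k` gives `σ_{(k+1)} = σ`. -/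
def permIns {k : ℕ} (σ : Equiv.Perm (Fin k)) (l : Fin (k+1)) : Equiv.Perm (Fin (k+1)) :=
  extPerm σ * Equiv.swap l (Fin.last k)

/-- A tensor is `μ`-block-constant if its entries agree on componentwise `μ`-equivalent
multi-indices (`i ∼ j` iff `μ i = μ j`). -/
def BlockConstant {k n : ℕ} (μ : Fin n → ℝ) (T : Tensor k n) : Prop :=
  ∀ i j : Fin k → Fin n, (∀ s, μ (i s) = μ (j s)) → T i = T j

/-- `H_in`: the diagonal-block part of `H` (w.r.t. the blocks of `μ`). -/
def matIn {n : ℕ} (μ : Fin n → ℝ) (H : Matrix (Fin n) (Fin n) ℝ) :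
    Matrix (Fin n) (Fin n) ℝ :=
  Matrix.of fun i j => if μ i = μ j then H i j else 0

/-- `H_out = H - H_in`: the off-diagonal-block part of `H`. -/
def matOut {n : ℕ} (μ : Fin n → ℝ) (H : Matrix (Fin n) (Fin n) ℝ) :
    Matrix (Fin n) (Fin n) ℝ :=
  H - matIn μ H

/-- The divided-difference tensor `T^{(l)}_out` of a `k`-tensor `T`, a `(k+1)`-tensor. -/
def outDD {k n : ℕ} (μ : Fin n → ℝ) (T : Tensor k n) (l : Fin k) : Tensor (k+1) n :=
  fun i => if μ (i l.castSucc) = μ (i (Fin.last k)) then 0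
    else (T (Function.update (fun s => i s.castSucc) l (i (Fin.last k)))
          - T (fun s => i s.castSucc)) / (μ (i (Fin.last k)) - μ (i l.castSucc))

/-- `T^{τ_l}`: the `(k+1)`-tensor equal to `T^{i₁…i_k}` on the hyperplane `i_l = i_{k+1}`
and `0` elsewhere. -/
def liftTau {k n : ℕ} (T : Tensor k n) (l : Fin k) : Tensor (k+1) n :=
  fun i => if i l.castSucc = i (Fin.last k) then T (fun s => i s.castSucc) else 0

/-- `T^{τ_l}_in`: the "inflated" `(k+1)`-tensor, equal to
`T^{i₁…i_{l-1} i_{k+1} i_{l+1}…i_k}` when `μ_{i_l} = μ_{i_{k+1}}` and `0` otherwise. -/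
def liftTauIn {k n : ℕ} (μ : Fin n → ℝ) (T : Tensor k n) (l : Fin k) : Tensor (k+1) n :=
  fun i => if μ (i l.castSucc) = μ (i (Fin.last k))
    then T (Function.update (fun s => i s.castSucc) l (i (Fin.last k))) else 0

/-- `lam` is the map sending each symmetric matrix to the vector of its eigenvalues
ordered nonincreasingly: it is nonincreasing and realized by an orthogonal
diagonalization. -/
def IsEigCF {n : ℕ} (lam : Matrix (Fin n) (Fin n) ℝ → Fin n → ℝ) : Prop :=
  ∀ A : Matrix (Fin n) (Fin n) ℝ, A.IsSymm →
    Antitone (lam A) ∧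
    ∃ U : Matrix (Fin n) (Fin n) ℝ, Uᵀ * U = 1 ∧
      A = U * Matrix.diagonal (lam A) * Uᵀ

/-- `h` is the concatenated vector `(λ(X₁ᵀ A X₁), …, λ(X_rᵀ A X_r))` of the nonincreasingly
ordered eigenvalues of the diagonal blocks of `A` (blocks determined by `μ`):
equivalently, `h` is nonincreasing within each block of `μ` and `Diag h` is obtained from
`A_in` by conjugating with a block-diagonal orthogonal matrix. -/
def IsBlockEig {n : ℕ} (μ : Fin n → ℝ) (A : Matrix (Fin n) (Fin n) ℝ)
    (h : Fin n → ℝ) : Prop :=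
  (∀ i j : Fin n, i ≤ j → μ i = μ j → h j ≤ h i) ∧
  ∃ V : Matrix (Fin n) (Fin n) ℝ, Vᵀ * V = 1 ∧
    (∀ i j, μ i ≠ μ j → V i j = 0) ∧
    Vᵀ * matIn μ A * V = Matrix.diagonal h

theorem aux_collapse {n k : ℕ} (f : (Fin k → Fin n) → ℝ) (N : Matrix (Fin n) (Fin n) ℝ)
    (i : Fin k → Fin n) (l : Fin k) :
    ∑ q : Fin k → Fin n, f q * ∏ s, (if s = l then N (i s) (q s) else
        (1 : Matrix (Fin n) (Fin n) ℝ) (i s) (q s))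
      = ∑ a : Fin n, f (Function.update i l a) * N (i l) a := by
  symm
  apply Fintype.sum_of_injective (fun a : Fin n => Function.update i l a)
  · exact Function.update_injective i l
  · intro q hq
    have : ∃ s, s ≠ l ∧ i s ≠ q s := by
      by_contra hcon
      push Not at hcon
      apply hq
      refine ⟨q l, ?_⟩
      funext s
      by_cases hs : s = l
      · subst hs; simp
      · simp [hs, hcon s hs]
    obtain ⟨s, hs, hne⟩ := this
    rw [Finset.prod_eq_zero (Finset.mem_univ s), mul_zero]
    simp [hs, hne]
  · intro a
    congr 1
    rw [Finset.prod_eq_single l]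
    · simp
    · intro s _ hs
      rw [if_neg hs, Function.update_of_ne hs, Matrix.one_apply_eq]
    · simp

theorem aux_expand {n k : ℕ} (U : Matrix (Fin n) (Fin n) ℝ)
    (H : Fin k → Matrix (Fin n) (Fin n) ℝ) (σ : Equiv.Perm (Fin k)) (p : Fin k → Fin n) :
    hadamardProd σ (fun s => Uᵀ * H s * U) p
      = ∑ i : Fin k → Fin n, ∑ q : Fin k → Fin n,
          (∏ s, H s (i s) (q (σ⁻¹ s))) * ∏ s, U (i s) (p s) * U (q s) (p s) := by
  unfold hadamardProd
  have h1 : ∀ s, (Uᵀ * H s * U) (p s) (p (σ⁻¹ s)) =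
      ∑ b, ∑ a, U a (p s) * H s a b * U b (p (σ⁻¹ s)) := by
    intro s
    simp [Matrix.mul_apply, Finset.sum_mul]
  simp_rw [h1, Finset.prod_univ_sum, Fintype.piFinset_univ]
  rw [Finset.sum_comm]
  refine Finset.sum_congr rfl fun i _ => ?_
  rw [← Equiv.sum_comp (Equiv.arrowCongr σ (Equiv.refl (Fin n)))]
  refine Finset.sum_congr rfl fun q _ => ?_
  have h2 : ∏ s, U (q s) (p s) = ∏ s, U (q (σ⁻¹ s)) (p (σ⁻¹ s)) :=
    (Equiv.prod_comp σ⁻¹ (fun s => U (q s) (p s))).symm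
  have h3 : ∀ s, (Equiv.arrowCongr σ (Equiv.refl (Fin n))) q s = q (σ⁻¹ s) := fun s => rfl
  simp_rw [h3, Finset.prod_mul_distrib, h2]
  ring

theorem aux_contract {n k : ℕ} (T : Tensor k n) (h : Fin n → ℝ) (l : Fin k)
    (p : Fin k → Fin n) : contract (liftTau T l) h p = T p * h (p l) := by
  simp [contract, liftTau]

theorem aux_ext_castSucc {k : ℕ} (σ : Equiv.Perm (Fin k)) (s : Fin k) :
    extPerm σ s.castSucc = (σ s).castSucc := by
  simp [extPerm, Equiv.permCongr]

theorem aux_ext_last {k : ℕ} (σ : Equiv.Perm (Fin k)) :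
    extPerm σ (Fin.last k) = Fin.last k := by
  simp [extPerm, Equiv.permCongr]

theorem aux_ins_last {k : ℕ} (σ : Equiv.Perm (Fin k)) (l : Fin k) :
    (permIns σ l.castSucc)⁻¹ (Fin.last k) = l.castSucc := by
  rw [Equiv.Perm.inv_eq_iff_eq]
  simp [permIns, aux_ext_last]

theorem aux_ins_castSucc {k n : ℕ} (σ : Equiv.Perm (Fin k)) (l s : Fin k)
    (p : Fin k → Fin n) (a : Fin n) :
    (Fin.snoc p a : Fin (k+1) → Fin n) ((permIns σ l.castSucc)⁻¹ s.castSucc)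
      = Function.update p l a (σ⁻¹ s) := by
  by_cases hs : σ⁻¹ s = l
  · have : (permIns σ l.castSucc)⁻¹ s.castSucc = Fin.last k := by
      rw [Equiv.Perm.inv_eq_iff_eq]
      simp [permIns, aux_ext_castSucc, ← hs]
    rw [this, hs]; simp
  · have : (permIns σ l.castSucc)⁻¹ s.castSucc = (σ⁻¹ s).castSucc := by
      rw [Equiv.Perm.inv_eq_iff_eq]
      have h1 : (σ⁻¹ s).castSucc ≠ l.castSucc := fun hc => hs (Fin.castSucc_injective _ hc)
      have h2 : (σ⁻¹ s).castSucc ≠ Fin.last k := (Fin.castSucc_lt_last _).ne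
      simp only [permIns, Equiv.Perm.mul_apply]
      rw [Equiv.swap_apply_of_ne_of_ne h1 h2, aux_ext_castSucc]
      simp
    rw [this, Function.update_of_ne hs]; simp

theorem aux_rhs {n k : ℕ} (μ : Fin n → ℝ)
    (M : Matrix (Fin n) (Fin n) ℝ) (hM : M.IsSymm)
    (T : Tensor k n) (hT : BlockConstant μ T)
    (H : Fin k → Matrix (Fin n) (Fin n) ℝ) (σ : Equiv.Perm (Fin k)) (l : Fin k) :
    tdot (liftTauIn μ T l)
          (hadamardProd (permIns σ l.castSucc) (Fin.snoc H (matIn μ M)))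
      = ∑ i : Fin k → Fin n, ∑ a : Fin n,
        (T i * ∏ s, H s (i s) (Function.update i l a (σ⁻¹ s))) * matIn μ M (i l) a := by
  unfold tdot
  rw [← Equiv.sum_comp (Fin.snocEquiv (fun _ : Fin (k+1) => Fin n)), Fintype.sum_prod_type,
    Finset.sum_comm]
  refine Finset.sum_congr rfl fun i _ => Finset.sum_congr rfl fun a _ => ?_
  have e : (Fin.snocEquiv (fun _ : Fin (k+1) => Fin n)) (a, i)
    = (Fin.snoc i a : Fin (k+1) → Fin n) := rfl
  rw [e]
  have h1 : hadamardProd (permIns σ l.castSucc) (Fin.snoc H (matIn μ M))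
      (Fin.snoc i a : Fin (k+1) → Fin n)
      = (∏ s, H s (i s) (Function.update i l a (σ⁻¹ s))) * matIn μ M a (i l) := by
    unfold hadamardProd
    rw [Fin.prod_univ_castSucc]
    simp only [aux_ins_castSucc, aux_ins_last, Fin.snoc_castSucc, Fin.snoc_last]
  rw [h1]
  by_cases hμ : μ (i l) = μ a
  · have h2 : T (Function.update i l a) = T i := by
      apply hT
      intro s
      by_cases hs : s = l
      · subst hs; simp [hμ]
      · simp [hs]
    simp [liftTauIn, hμ, h2, matIn, hM.apply]
    ring
  · simp [liftTauIn, hμ, matIn]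

/-- Theorem `dec15a`, part 2. Fix `μ`. Let `U` be a block-diagonal
orthogonal matrix, `M` symmetric, and `h` with `UᵀM_in U = Diag h`. For any
`μ`-block-constant `k`-tensor `T`, matrices `H₁,…,H_k`, permutation `σ`, and every
`l ∈ {1,…,k}`:
`⟨T^{τ_l}[h], H̃₁ ∘_σ ⋯ ∘_σ H̃_k⟩ = ⟨T^{τ_l}_in, H₁ ∘_{σ_{(l)}} ⋯ ∘_{σ_{(l)}} H_k ∘_{σ_{(l)}} M_in⟩`,
where `H̃ᵢ = UᵀHᵢU`. -/
theorem statement13 {n k : ℕ} (μ : Fin n → ℝ)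
    (U : Matrix (Fin n) (Fin n) ℝ) (hU : Uᵀ * U = 1)
    (hUb : ∀ i j : Fin n, μ i ≠ μ j → U i j = 0)
    (M : Matrix (Fin n) (Fin n) ℝ) (hM : M.IsSymm)
    (h : Fin n → ℝ) (hh : Uᵀ * matIn μ M * U = Matrix.diagonal h)
    (T : Tensor k n) (hT : BlockConstant μ T)
    (H : Fin k → Matrix (Fin n) (Fin n) ℝ) (σ : Equiv.Perm (Fin k)) (l : Fin k) :
    tdot (contract (liftTau T l) h) (hadamardProd σ (fun s => Uᵀ * H s * U))
      = tdot (liftTauIn μ T l)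
          (hadamardProd (permIns σ l.castSucc) (Fin.snoc H (matIn μ M))) := by
  rw [aux_rhs μ M hM T hT]
  have hU' : U * Uᵀ = 1 := mul_eq_one_comm.mp hU
  have hMin : matIn μ M = U * Matrix.diagonal h * Uᵀ := by
    rw [← hh]
    calc matIn μ M = (U * Uᵀ) * matIn μ M * (U * Uᵀ) := by rw [hU']; simp
      _ = _ := by simp only [Matrix.mul_assoc]
  have hc : ∀ i : Fin k → Fin n, ∑ a : Fin n,
        (T i * ∏ s, H s (i s) (Function.update i l a (σ⁻¹ s))) * matIn μ M (i l) a = _ :=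
    fun i => (aux_collapse (fun q => T i * ∏ s, H s (i s) (q (σ⁻¹ s))) (matIn μ M) i l).symm
  rw [Finset.sum_congr rfl fun i _ => hc i]
  unfold tdot
  simp_rw [aux_contract, aux_expand, Finset.mul_sum]
  rw [Finset.sum_comm]
  refine Finset.sum_congr rfl fun i _ => ?_
  rw [Finset.sum_comm]
  refine Finset.sum_congr rfl fun q _ => ?_
  have hD : ∀ s, (if s = l then matIn μ M (i s) (q s) else
      (1 : Matrix (Fin n) (Fin n) ℝ) (i s) (q s))
      = ∑ a, (if s = l then h a else 1) * (U (i s) a * U (q s) a) := by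
    intro s
    by_cases hs : s = l
    · simp only [hs, if_true, hMin]
      rw [Matrix.mul_apply]
      simp only [Matrix.mul_diagonal, Matrix.transpose_apply]
      exact Finset.sum_congr rfl fun a _ => by ring
    · simp [hs, ← hU', Matrix.mul_apply]
  simp_rw [hD, Finset.prod_univ_sum, Fintype.piFinset_univ, Finset.mul_sum]
  refine Finset.sum_congr rfl fun p _ => ?_
  rw [Finset.prod_mul_distrib (f := fun s => if s = l then h (p s) else 1)]
  have hh1 : (∏ s, if s = l then h (p s) else 1) = h (p l) := by
    simp
  rw [hh1]
  by_cases hp : ∀ s, μ (i s) = μ (p s)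
  · rw [hT i p hp]; ring
  · push Not at hp
    obtain ⟨s, hs⟩ := hp
    have : ∏ s, U (i s) (p s) * U (q s) (p s) = 0 :=
      Finset.prod_eq_zero (Finset.mem_univ s) (by rw [hUb _ _ hs, zero_mul])
    rw [this]; ring

end
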